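/- Let p be a prime number, let d ≥ 1, let S = ℤ_p[[T_1, …, T_d]] be the formal power series ring in d variables over the ring of p-adic integers ℤ_p, and let R = S[[X]] be the power series ring in one further variable over S (so that R is isomorphic to ℤ_p[[T_1, …, T_d, X]]). Let M be a finitely generated torsion R-module. If the quotient M/XM, regarded as an S-module via the natural inclusion S → R, is pseudo-null over S, then M is pseudo-null over R. -/

import Mathlib

/-- A module `M` over a commutative ring `Λ` is pseudo-null if it has two nonzero,
relatively prime annihilators. -/
def IsPseudoNull (Λ : Type*) [CommRing Λ] (M : Type*) [AddCommGroup M] [Module Λ M] : Prop :=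
  ∃ f g : Λ, f ≠ 0 ∧ g ≠ 0 ∧ (∀ m : M, f • m = 0) ∧ (∀ m : M, g • m = 0) ∧ IsRelPrime f g

/-- The `S`-module structure on `M/XM` obtained by restricting scalars along the
natural inclusion `S → S[[X]]`. -/
noncomputable instance instModuleQuotXSMul (S : Type*) [CommRing S]
    (M : Type*) [AddCommGroup M] [Module (PowerSeries S) M] :
    Module S (M ⧸ (Ideal.span {(PowerSeries.X : PowerSeries S)} •
      (⊤ : Submodule (PowerSeries S) M))) :=
  Module.compHom _ (algebraMap S (PowerSeries S))

/-!
If `f` and `g` kill `M / XM`, the determinant trick applied to multiplication by `f` and by `g`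
on `M` produces annihilators `F` and `G` of `M` with constant terms `f ^ a` and `g ^ b`. When `S`
has unique factorization, powers of relatively prime elements are relatively prime, and a common
divisor of `F` and `G` in `S⟦X⟧` is a unit because its constant term is one.

That power series over a complete local principal ideal domain `A` have unique factorization is
shown by Kaplansky's criterion: every nonzero prime ideal `P` contains a prime element. Either the
uniformizer of `A` lies in `P`, or `P` contains some `f` that is nonzero modulo the uniformizer.
A substitution `Xᵢ ↦ Xᵢ + X₀ ^ wᵢ` makes `f` nonzero on the `X₀`-axis, so Weierstrass preparation
replaces `f` by a distinguished polynomial in `X₀`, whose coefficients lie in a ring that has unique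
factorization by induction. A prime factor of it is again distinguished, hence stays prime among
the power series, the two quotient rings being isomorphic.
-/

section AdicComplete

open PowerSeries

variable {A : Type*} [CommRing A]

theorem coeff_mem_pow_of_mem_comap_constantCoeff_pow {I : Ideal A} {k : ℕ} {f : A⟦X⟧}
    (hf : f ∈ I.comap constantCoeff ^ k) (n : ℕ) : coeff n f ∈ I ^ (k - n) := by
  induction k generalizing f n with
  | zero => simp
  | succ k ih =>
    rw [pow_succ'] at hf
    refine Submodule.mul_induction_on hf (fun g hg h hh ↦ ?_) fun g h hg hh ↦ ?_
    · rw [coeff_mul]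
      refine Ideal.sum_mem _ fun ⟨i, j⟩ hij ↦ ?_
      rw [Finset.HasAntidiagonal.mem_antidiagonal] at hij
      rcases Nat.eq_zero_or_pos i with rfl | hi
      · have : coeff 0 g * coeff j h ∈ I * I ^ (k - j) :=
          Ideal.mul_mem_mul (by simpa using hg) (ih hh j)
        rw [← pow_succ'] at this
        exact Ideal.pow_le_pow_right (by lia) this
      · exact Ideal.mul_mem_left _ _ (Ideal.pow_le_pow_right (by lia) (ih hh j))
    · rw [map_add]
      exact add_mem hg hh

theorem mem_comap_constantCoeff_pow_iff {I : Ideal A} {k : ℕ} {f : A⟦X⟧} :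
    f ∈ I.comap constantCoeff ^ k ↔ ∀ n, coeff n f ∈ I ^ (k - n) := by
  refine ⟨coeff_mem_pow_of_mem_comap_constantCoeff_pow, fun hf ↦ ?_⟩
  have X_pow_mem (n : ℕ) : (X : A⟦X⟧) ^ n ∈ I.comap constantCoeff ^ n :=
    Ideal.pow_mem_pow (by simp) n
  have C_mem {n : ℕ} {a : A} (ha : a ∈ I ^ n) : C a ∈ I.comap constantCoeff ^ n := by
    have : I.map C ≤ I.comap constantCoeff :=
      Ideal.map_le_iff_le_comap.2 fun a ha ↦ by simpa using ha
    exact Ideal.pow_right_mono this n (Ideal.map_pow C I n ▸ Ideal.mem_map_of_mem C ha)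
  rw [f.eq_X_pow_mul_shift_add_trunc k, ← Polynomial.eval₂_C_X_eq_coe, eval₂_trunc_eq_sum_range]
  refine add_mem (Ideal.mul_mem_right _ _ (X_pow_mem k)) (Ideal.sum_mem _ fun n hn ↦ ?_)
  rw [← Nat.sub_add_cancel (Finset.mem_range.1 hn).le, pow_add]
  exact Ideal.mul_mem_mul (C_mem (hf n)) (X_pow_mem n)

instance isAdicComplete_comap_constantCoeff (I : Ideal A) [IsAdicComplete I A] :
    IsAdicComplete (I.comap (constantCoeff (R := A))) A⟦X⟧ where
  haus' f hf := by
    simp only [SModEq.zero, smul_eq_mul, Ideal.mul_top, mem_comap_constantCoeff_pow_iff] at hf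
    ext n
    refine IsHausdorff.haus (I := I) inferInstance _ fun k ↦ ?_
    simpa [SModEq.zero] using hf (k + n) n
  prec' f hf := by
    simp only [SModEq.sub_mem, smul_eq_mul, Ideal.mul_top, mem_comap_constantCoeff_pow_iff,
      map_sub] at hf ⊢
    have exists_limit (n : ℕ) :
        ∃ l : A, ∀ k, coeff n (f (k + n)) ≡ l [SMOD (I ^ k • ⊤ : Ideal A)] :=
      IsPrecomplete.prec inferInstance fun {a b} hab ↦ by
        simpa [SModEq.sub_mem] using hf (Nat.add_le_add_right hab n) n
    choose l hl using exists_limit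
    refine ⟨mk l, fun k n ↦ ?_⟩
    rcases le_total n k with hnk | hkn
    · simpa [SModEq.sub_mem, Nat.sub_add_cancel hnk] using hl n (k - n)
    · simp [Nat.sub_eq_zero_of_le hkn]

variable [IsLocalRing A] [IsAdicComplete (IsLocalRing.maximalIdeal A) A]

instance isAdicComplete_maximalIdeal_powerSeries :
    IsAdicComplete (IsLocalRing.maximalIdeal A⟦X⟧) A⟦X⟧ := by
  have : IsLocalHom (constantCoeff (R := A)) := ⟨fun _ ↦ isUnit_iff_constantCoeff.2⟩
  rw [← IsLocalRing.maximalIdeal_comap (constantCoeff (R := A))]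
  infer_instance

instance isAdicComplete_maximalIdeal_mvPowerSeries_fin (n : ℕ) :
    IsAdicComplete (IsLocalRing.maximalIdeal (MvPowerSeries (Fin n) A))
      (MvPowerSeries (Fin n) A) := by
  induction n with
  | zero =>
    rw [← IsAdicComplete.congr_ringEquiv _ (MvPowerSeries.isEmptyEquiv (Fin 0) A).toRingEquiv,
      IsLocalRing.map_ringEquiv_maximalIdeal]
    infer_instance
  | succ n _ =>
    rw [← IsAdicComplete.congr_ringEquiv _ (MvPowerSeries.finSuccEquiv A n).toRingEquiv,
      IsLocalRing.map_ringEquiv_maximalIdeal]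
    infer_instance

end AdicComplete

section Distinguished

open Polynomial IsLocalRing

variable {A : Type*} [CommRing A]

theorem isDistinguishedAt_maximalIdeal_of_dvd [IsLocalRing A] {f g : A[X]}
    (hg : g.IsDistinguishedAt (maximalIdeal A)) (hf : f.Monic) (hfg : f ∣ g) :
    f.IsDistinguishedAt (maximalIdeal A) := by
  have map_dvd_X_pow : f.map (residue A) ∣ X ^ g.natDegree :=
    (show g.map (residue A) = _ from hg.map_eq_X_pow) ▸ Polynomial.map_dvd _ hfg
  obtain ⟨k, -, hk⟩ := (dvd_prime_pow prime_X _).1 map_dvd_X_pow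
  have map_eq_X_pow : f.map (residue A) = X ^ k :=
    eq_of_monic_of_associated (hf.map _) (monic_X_pow k) hk
  have natDegree_eq : f.natDegree = k := by
    rw [← hf.natDegree_map (residue A), map_eq_X_pow, natDegree_X_pow]
  refine ⟨⟨fun {i} hi ↦ ?_⟩, hf⟩
  rw [← residue_eq_zero_iff, ← coeff_map, map_eq_X_pow, coeff_X_pow, if_neg (by lia)]

theorem prime_coe_of_isDistinguishedAt {I : Ideal A} [IsAdicComplete I A] {q : A[X]}
    (hq : Prime q) (hqI : q.IsDistinguishedAt I) : Prime (q : PowerSeries A) := by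
  have coe_ne_zero : (q : PowerSeries A) ≠ 0 := by simpa using hq.ne_zero
  rw [← Ideal.span_singleton_prime coe_ne_zero, ← Ideal.Quotient.isDomain_iff_prime]
  have : IsDomain (A[X] ⧸ Ideal.span {q}) :=
    (Ideal.Quotient.isDomain_iff_prime _).2 ((Ideal.span_singleton_prime hq.ne_zero).2 hq)
  exact hqI.algEquivQuotient.symm.toMulEquiv.isDomain

variable [IsDomain A] [UniqueFactorizationMonoid A]

theorem exists_monic_prime_dvd_mem_of_isPrime {P : Ideal A[X]} [hP : P.IsPrime] {g : A[X]}
    (hg : g.Monic) (hgP : g ∈ P) : ∃ q ∈ P, q.Monic ∧ Prime q ∧ q ∣ g := by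
  obtain ⟨s, hs, hsg⟩ := UniqueFactorizationMonoid.exists_prime_factors g hg.ne_zero
  obtain ⟨q, hqs, hqP⟩ :=
    (hP.multiset_prod_mem_iff_exists_mem s).1 (Ideal.mem_of_dvd _ hsg.symm.dvd hgP)
  have hqg : q ∣ g := (Multiset.dvd_prod hqs).trans hsg.dvd
  obtain ⟨u, hu⟩ : IsUnit q.leadingCoeff := hg.isUnit_leadingCoeff_of_dvd hqg
  obtain ⟨r, hr, hrq⟩ : ∃ r : A[X], r.Monic ∧ Associated r q :=
    ⟨C (↑u⁻¹ : A) * q, monic_C_mul_of_mul_leadingCoeff_eq_one (by rw [← hu, Units.inv_mul]),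
      associated_unit_mul_left q _ (isUnit_C.2 (Units.isUnit u⁻¹))⟩
  exact ⟨r, Ideal.mem_of_dvd P hrq.symm.dvd hqP, hr, hrq.symm.prime (hs q hqs), hrq.dvd.trans hqg⟩

theorem exists_prime_mem_of_map_residue_ne_zero [IsLocalRing A]
    [IsAdicComplete (maximalIdeal A) A] {P : Ideal (PowerSeries A)} [hP : P.IsPrime]
    {f : PowerSeries A} (hfP : f ∈ P) (hf : f.map (residue A) ≠ 0) : ∃ q ∈ P, Prime q := by
  obtain ⟨g, h, H⟩ := f.exists_isWeierstrassFactorization hf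
  have hgP : (g : PowerSeries A) ∈ P := by
    rw [H.eq_mul] at hfP
    exact (Ideal.mul_unit_mem_iff_mem P H.isUnit).1 hfP
  obtain ⟨q, hqP, hqm, hq, hqg⟩ := exists_monic_prime_dvd_mem_of_isPrime
    (P := P.comap coeToPowerSeries.ringHom) H.isDistinguishedAt.monic hgP
  exact ⟨q, hqP, prime_coe_of_isDistinguishedAt hq
    (isDistinguishedAt_maximalIdeal_of_dvd H.isDistinguishedAt hqm hqg)⟩

end Distinguished

section ChangeOfVariables

theorem weight_add_single {σ : Type*} [DecidableEq σ] (w : σ → ℕ) (i : σ) (k : ℕ) (d : σ →₀ ℕ) :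
    Finsupp.weight (w + Pi.single i k) d = Finsupp.weight w d + d i * k := by
  rw [← smul_eq_mul, ← Finsupp.weight_single_index]
  simp only [Finsupp.weight_apply, Pi.add_apply, smul_add, Finsupp.sum_add]

theorem exists_weight_unique_of_eqOn_compl {σ : Type*} (i₀ : σ) {T : Finset σ} (hi₀ : i₀ ∉ T)
    {s : Set (σ →₀ ℕ)} (hs : s.Nonempty)
    (hsT : ∀ a ∈ s, ∀ b ∈ s, ∀ i, i ≠ i₀ → i ∉ T → a i = b i) :
    ∃ w : σ → ℕ, w i₀ = 1 ∧ (∀ i ∈ T, w i ≠ 0) ∧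
      ∃ a ∈ s, ∀ b ∈ s, Finsupp.weight w b = Finsupp.weight w a → b = a := by
  classical
  induction T using Finset.induction generalizing s with
  | empty =>
    obtain ⟨a, ha⟩ := hs
    refine ⟨Pi.single i₀ 1, by simp, by simp, a, ha, fun b hb hba ↦ Finsupp.ext fun i ↦ ?_⟩
    by_cases hi : i = i₀
    · simpa [hi, Finsupp.weight_single_index] using hba
    · exact hsT b hb a ha i hi (Finset.notMem_empty i)
  | insert j T _ ih =>
    obtain ⟨hj₀, hT₀⟩ : i₀ ≠ j ∧ i₀ ∉ T := by simpa using hi₀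
    obtain ⟨c, hc, hmin⟩ : ∃ c ∈ s, ∀ b ∈ s, c j ≤ b j := by
      obtain ⟨c, hc, hmin⟩ := exists_minimalFor_of_wellFoundedLT (· ∈ s) (fun b ↦ b j) hs
      exact ⟨c, hc, fun b hb ↦ (le_total _ _).elim id (hmin hb)⟩
    obtain ⟨w, hw₀, hwT, a, ⟨has, haj⟩, huniq⟩ :=
      ih hT₀ (s := {b ∈ s | b j = c j}) ⟨c, hc, rfl⟩ fun a ha b hb i hi hiT ↦ by
        by_cases hij : i = j
        · rw [hij, ha.2, hb.2]
        · exact hsT a ha.1 b hb.1 i hi (by simp [hij, hiT])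
    -- The weight added at `j` is so large that equal weight forces the minimal `j`-coordinate.
    refine ⟨w + Pi.single j (Finsupp.weight w a + 1), by simp [hw₀, hj₀], ?_, a, has,
      fun b hb hba ↦ ?_⟩
    · intro i hi
      by_cases hij : i = j
      · simp [hij]
      · simpa [hij] using hwT i (Finset.mem_of_mem_insert_of_ne hi hij)
    · rw [weight_add_single, weight_add_single, haj] at hba
      have hbj : b j = c j := by
        refine le_antisymm (not_lt.1 fun hlt ↦ ?_) (hmin b hb)
        nlinarith [Nat.mul_le_mul_right (Finsupp.weight w a + 1) (Nat.succ_le_of_lt hlt)]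
      exact huniq b ⟨hb, hbj⟩ (by rwa [hbj, Nat.add_right_cancel_iff] at hba)

theorem exists_weight_unique {σ : Type*} [Finite σ] (i₀ : σ) {s : Set (σ →₀ ℕ)}
    (hs : s.Nonempty) : ∃ w : σ → ℕ, w i₀ = 1 ∧ (∀ i, w i ≠ 0) ∧
      ∃ a ∈ s, ∀ b ∈ s, Finsupp.weight w b = Finsupp.weight w a → b = a := by
  classical
  cases nonempty_fintype σ
  obtain ⟨w, hw₀, hw, hs⟩ := exists_weight_unique_of_eqOn_compl i₀
    (Finset.notMem_erase i₀ Finset.univ) hs (by simp +contextual)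
  refine ⟨w, hw₀, fun i ↦ ?_, hs⟩
  by_cases hi : i = i₀
  · simp [hi, hw₀]
  · exact hw i (by simp [hi])

open MvPowerSeries

variable {n : ℕ} {R : Type*} [CommRing R]

/-- The family `X₀, X₁ + r X₀ ^ w₁, …, Xₙ + r X₀ ^ wₙ`, to be substituted for the variables.
The entry `w 0` does not occur; as the weight of `X₀` it will be `1`. -/
noncomputable def shear (w : Fin (n + 1) → ℕ) (r : R) :
    Fin (n + 1) → MvPowerSeries (Fin (n + 1)) R :=
  Fin.cons (X 0) fun i ↦ X i.succ + r • X 0 ^ w i.succ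

theorem hasSubst_shear {w : Fin (n + 1) → ℕ} (hw : ∀ i, w i ≠ 0) (r : R) : HasSubst (shear w r) :=
  hasSubst_of_constantCoeff_zero fun i ↦ by cases i using Fin.cases <;> simp [shear, hw]

theorem substAlgHom_shear_comp_substAlgHom_shear {w : Fin (n + 1) → ℕ} (hw : ∀ i, w i ≠ 0) {r s : R}
    (hrs : r + s = 0) :
    (substAlgHom (R := R) (hasSubst_shear hw r)).comp
      (substAlgHom (R := R) (hasSubst_shear hw s)) = AlgHom.id R _ := by
  have hX : (fun i ↦ substAlgHom (R := R) (hasSubst_shear hw r) (shear w s i)) = X := by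
    funext i
    cases i using Fin.cases with
    | zero => exact substAlgHom_X _ 0
    | succ i =>
      simp only [shear, Fin.cons_succ, map_add, map_smul, map_pow, substAlgHom_X, Fin.cons_zero]
      rw [add_assoc, ← add_smul, hrs, zero_smul, add_zero]
  refine (substAlgHom_comp_substAlgHom (R := R)
    (hasSubst_shear hw s) (hasSubst_shear hw r)).trans ?_
  ext1 f
  rw [substAlgHom_apply, hX, subst_self]
  rfl

/-- The change of variables `X₀ ↦ X₀`, `Xᵢ ↦ Xᵢ + X₀ ^ wᵢ` for `i ≥ 1`, which serves to make a
power series nonzero on the first coordinate axis. -/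
noncomputable def shearEquiv (w : Fin (n + 1) → ℕ) (hw : ∀ i, w i ≠ 0) :
    MvPowerSeries (Fin (n + 1)) R ≃ₐ[R] MvPowerSeries (Fin (n + 1)) R :=
  AlgEquiv.ofAlgHom (substAlgHom (hasSubst_shear hw 1)) (substAlgHom (hasSubst_shear hw (-1)))
    (substAlgHom_shear_comp_substAlgHom_shear hw (add_neg_cancel 1))
    (substAlgHom_shear_comp_substAlgHom_shear hw (neg_add_cancel 1))

/-- Restriction `f ↦ f(X, 0, …, 0)` of a power series to the first coordinate axis, defined by
viewing `f` as a power series in `X₀` over the ring of power series in the other variables. -/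
noncomputable def axisHom (n : ℕ) (R : Type*) [CommRing R] :
    MvPowerSeries (Fin (n + 1)) R →+* PowerSeries R :=
  (PowerSeries.map constantCoeff).comp (finSuccEquiv R n).toRingEquiv.toRingHom

theorem coeff_axisHom (f : MvPowerSeries (Fin (n + 1)) R) (m : ℕ) :
    PowerSeries.coeff m (axisHom n R f) = coeff (Finsupp.cons m 0) f :=
  coeff_coeff_finSuccEquiv f

theorem axisHom_shear {w : Fin (n + 1) → ℕ} (hw₀ : w 0 = 1) (i : Fin (n + 1)) :
    axisHom n R (shear w 1 i) = PowerSeries.X ^ w i := by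
  cases i using Fin.cases <;> simp [axisHom, shear, hw₀]

theorem axisHom_prod_shear {w : Fin (n + 1) → ℕ} (hw₀ : w 0 = 1) (d : Fin (n + 1) →₀ ℕ) :
    axisHom n R (d.prod fun i e ↦ shear w 1 i ^ e) = PowerSeries.X ^ Finsupp.weight w d := by
  rw [Finsupp.prod, map_prod, Finsupp.weight_apply, Finsupp.sum]
  simp only [map_pow, axisHom_shear hw₀, ← pow_mul', Finset.prod_pow_eq_pow_sum, smul_eq_mul]

theorem coeff_axisHom_shearEquiv {w : Fin (n + 1) → ℕ} (hw₀ : w 0 = 1) (hw : ∀ i, w i ≠ 0)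
    (f : MvPowerSeries (Fin (n + 1)) R) (m : ℕ) :
    PowerSeries.coeff m (axisHom n R (shearEquiv w hw f)) =
      ∑ᶠ (d) (_ : Finsupp.weight w d = m), coeff d f := by
  have shearEquiv_eq : shearEquiv w hw f = subst (shear w 1) f :=
    substAlgHom_apply (hasSubst_shear hw 1) f
  rw [coeff_axisHom, shearEquiv_eq, coeff_subst (hasSubst_shear hw 1)]
  refine finsum_congr fun d ↦ ?_
  rw [← coeff_axisHom, axisHom_prod_shear hw₀, PowerSeries.coeff_X_pow, finsum_eq_if]
  simp [eq_comm]

theorem exists_map_axisHom_shearEquiv_ne_zero {k : Type*} [CommRing k] (φ : R →+* k)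
    {f : MvPowerSeries (Fin (n + 1)) R} (hf : f.map φ ≠ 0) :
    ∃ (w : Fin (n + 1) → ℕ) (hw : ∀ i, w i ≠ 0),
      (axisHom n R (shearEquiv w hw f)).map φ ≠ 0 := by
  obtain ⟨w, hw₀, hw, a, ha, huniq⟩ :=
    exists_weight_unique 0 (s := {d | coeff d (f.map φ) ≠ 0}) (by
      by_contra! h
      exact hf (MvPowerSeries.ext fun d ↦ by simpa using Set.eq_empty_iff_forall_notMem.1 h d))
  refine ⟨w, hw, fun h ↦ ha ?_⟩
  calc coeff a (f.map φ)
      = ∑ᶠ (d) (_ : Finsupp.weight w d = Finsupp.weight w a), φ (coeff d f) := by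
        rw [finsum_eq_single _ a, finsum_eq_if, if_pos rfl, coeff_map]
        intro d hda
        rw [finsum_eq_if]
        split_ifs with hweight
        · by_contra hd
          exact hda (huniq d (by simpa using hd) hweight)
        · rfl
    _ = φ (PowerSeries.coeff (Finsupp.weight w a) (axisHom n R (shearEquiv w hw f))) := by
        rw [coeff_axisHom_shearEquiv hw₀]
        exact (φ.toAddMonoidHom.map_finsum_mem _
          (Finsupp.finite_of_nat_weight_eq w hw (Finsupp.weight w a))).symm
    _ = 0 := by rw [← PowerSeries.coeff_map, h, map_zero]

end ChangeOfVariables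

section PrimeC

open MvPowerSeries

variable {σ R : Type*} [CommRing R]

theorem map_eq_zero_iff_C_dvd {k : Type*} [CommRing k] {φ : R →+* k} {a : R}
    (hφ : RingHom.ker φ = Ideal.span {a}) {f : MvPowerSeries σ R} :
    f.map φ = 0 ↔ C a ∣ f := by
  have coeff_map_eq_zero_iff (d : σ →₀ ℕ) : coeff d (f.map φ) = 0 ↔ a ∣ coeff d f := by
    rw [coeff_map, ← RingHom.mem_ker, hφ, Ideal.mem_span_singleton]
  simp only [MvPowerSeries.ext_iff, coeff_zero, coeff_map_eq_zero_iff]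
  refine ⟨fun h ↦ ?_, fun ⟨g, hg⟩ d ↦ ⟨coeff d g, by rw [hg, coeff_C_mul]⟩⟩
  choose g hg using h
  exact ⟨(g : MvPowerSeries σ R), MvPowerSeries.ext fun d ↦
    (hg d).trans (coeff_C_mul d (g : MvPowerSeries σ R) a).symm⟩

theorem prime_C {a : R} (ha : Prime a) : Prime (C a : MvPowerSeries σ R) := by
  have : (Ideal.span {a}).IsPrime := (Ideal.span_singleton_prime ha.ne_zero).2 ha
  refine ⟨fun h ↦ ha.ne_zero ?_, fun h ↦ ha.not_isUnit ?_, fun f g hfg ↦ ?_⟩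
  · simpa using congr(constantCoeff $h)
  · simpa using h.map (constantCoeff (σ := σ) (R := R))
  · simpa only [← map_eq_zero_iff_C_dvd (Ideal.mk_ker (I := Ideal.span {a})), map_mul,
      mul_eq_zero] using hfg

variable {A : Type*} [CommRing A] [IsDomain A] [IsPrincipalIdealRing A] [IsLocalRing A]

theorem exists_prime_mem_or_exists_mem_map_residue_ne_zero [Finite σ]
    {P : Ideal (MvPowerSeries σ A)} [hP : P.IsPrime] (hP₀ : P ≠ ⊥) :
    (∃ q ∈ P, Prime q) ∨ ∃ f ∈ P, f.map (IsLocalRing.residue A) ≠ 0 := by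
  have : IsDomain (MvPowerSeries σ A) := NoZeroDivisors.to_isDomain _
  obtain ⟨ϖ, hϖ⟩ := (IsPrincipalIdealRing.principal (IsLocalRing.maximalIdeal A)).principal
  have map_residue_eq_zero_iff {f : MvPowerSeries σ A} :
      f.map (IsLocalRing.residue A) = 0 ↔ C ϖ ∣ f :=
    map_eq_zero_iff_C_dvd (IsLocalRing.ker_residue.trans hϖ)
  obtain ⟨f, hfP, hf₀⟩ := Submodule.exists_mem_ne_zero_of_ne_bot hP₀
  by_cases hϖ₀ : ϖ = 0
  · exact .inr ⟨f, hfP, by simpa [map_residue_eq_zero_iff, hϖ₀] using hf₀⟩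
  have hϖ_prime : Prime ϖ := (Ideal.span_singleton_prime hϖ₀).1 <| by
    rw [← Ideal.submodule_span_eq, ← hϖ]
    infer_instance
  have hC : Prime (C ϖ : MvPowerSeries σ A) := prime_C hϖ_prime
  obtain ⟨g, hfg, hg⟩ :=
    (FiniteMultiplicity.of_not_isUnit hC.not_isUnit hf₀).exists_eq_pow_mul_and_not_dvd
  rw [hfg] at hfP
  rcases hP.mem_or_mem hfP with hϖP | hgP
  · exact .inl ⟨C ϖ, hP.mem_of_pow_mem _ hϖP, hC⟩
  · exact .inr ⟨g, hgP, mt map_residue_eq_zero_iff.1 hg⟩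

end PrimeC

section UniqueFactorization

open IsLocalRing

variable {n : ℕ} {A : Type*} [CommRing A] [IsLocalRing A]

theorem map_residue_finSuccEquiv_ne_zero {f : MvPowerSeries (Fin (n + 1)) A}
    (hf : (axisHom n A f).map (residue A) ≠ 0) :
    (MvPowerSeries.finSuccEquiv A n f).map (residue (MvPowerSeries (Fin n) A)) ≠ 0 := by
  refine fun h ↦ hf (PowerSeries.ext fun m ↦ ?_)
  have coeff_nonunit : ¬IsUnit (PowerSeries.coeff m (MvPowerSeries.finSuccEquiv A n f)) := by
    rw [← mem_nonunits_iff, ← mem_maximalIdeal, ← residue_eq_zero_iff, ← PowerSeries.coeff_map, h,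
      map_zero]
  rw [MvPowerSeries.isUnit_iff_constantCoeff] at coeff_nonunit
  rw [PowerSeries.coeff_map, map_zero, residue_eq_zero_iff, mem_maximalIdeal, mem_nonunits_iff]
  simpa [axisHom] using coeff_nonunit

variable [IsDomain A] [IsPrincipalIdealRing A] [IsAdicComplete (maximalIdeal A) A]

theorem uniqueFactorizationMonoid_mvPowerSeries_fin (n : ℕ) :
    UniqueFactorizationMonoid (MvPowerSeries (Fin n) A) := by
  induction n with
  | zero =>
    exact (MvPowerSeries.isEmptyEquiv (Fin 0) A).symm.toMulEquiv.uniqueFactorizationMonoid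
      inferInstance
  | succ n _ =>
    have (m : ℕ) : IsDomain (MvPowerSeries (Fin m) A) := NoZeroDivisors.to_isDomain _
    refine UniqueFactorizationMonoid.iff_exists_prime_mem_of_isPrime.2 fun P hP₀ hP ↦ ?_
    obtain hq | ⟨f, hfP, hf⟩ := exists_prime_mem_or_exists_mem_map_residue_ne_zero hP₀
    · exact hq
    obtain ⟨w, hw, hfw⟩ := exists_map_axisHom_shearEquiv_ne_zero (residue A) hf
    let e : MvPowerSeries (Fin (n + 1)) A ≃+* PowerSeries (MvPowerSeries (Fin n) A) :=
      ((shearEquiv w hw).trans (MvPowerSeries.finSuccEquiv A n)).toRingEquiv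
    have hef : e f ∈ P.comap e.symm := by simpa [Ideal.mem_comap] using hfP
    obtain ⟨q, hqP, hq⟩ :=
      exists_prime_mem_of_map_residue_ne_zero hef (map_residue_finSuccEquiv_ne_zero hfw)
    exact ⟨e.symm q, hqP, (MulEquiv.prime_iff e.symm.toMulEquiv).2 hq⟩

end UniqueFactorization

section Annihilator

theorem exists_mem_annihilator_sub_pow_mem {R M : Type*} [CommRing R] [AddCommGroup M] [Module R M]
    [Module.Finite R M] {I : Ideal R} {x : R} (hx : ∀ m : M, x • m ∈ I • (⊤ : Submodule R M)) :
    ∃ r ∈ Module.annihilator R M, ∃ n : ℕ, r - x ^ n ∈ I := by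
  obtain ⟨P, hP, -, hPI, hPx⟩ :=
    LinearMap.exists_monic_and_natDegree_eq_and_coeff_mem_pow_and_aeval_eq_zero R
      (algebraMap R (Module.End R M) x) I (by rintro _ ⟨m, rfl⟩; exact hx m)
  refine ⟨P.eval x, Module.mem_annihilator.2 fun m ↦ ?_, P.natDegree, ?_⟩
  · rw [Polynomial.aeval_algebraMap_apply_eq_algebraMap_eval] at hPx
    exact congr($hPx m)
  · nth_rw 1 [hP.as_sum]
    simp only [Polynomial.eval_add, Polynomial.eval_pow, Polynomial.eval_X,
      Polynomial.eval_finsetSum, Polynomial.eval_mul, Polynomial.eval_C, add_sub_cancel_left]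
    refine Ideal.sum_mem _ fun i hi ↦ Ideal.mul_mem_right _ _ ?_
    exact Ideal.pow_le_self (Nat.sub_ne_zero_of_lt (Finset.mem_range.1 hi)) (hPI i)

theorem exists_mem_annihilator_constantCoeff_eq_pow {S M : Type*} [CommRing S]
    [AddCommGroup M] [Module (PowerSeries S) M] [Module.Finite (PowerSeries S) M] {s : S}
    (hs : ∀ m : M ⧸ (Ideal.span {(PowerSeries.X : PowerSeries S)} •
      (⊤ : Submodule (PowerSeries S) M)), s • m = 0) :
    ∃ F ∈ Module.annihilator (PowerSeries S) M, ∃ n : ℕ, PowerSeries.constantCoeff F = s ^ n := by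
  obtain ⟨F, hF, n, hFn⟩ := exists_mem_annihilator_sub_pow_mem (x := PowerSeries.C s)
    fun m : M ↦ (Submodule.Quotient.mk_eq_zero _).1 (hs (Submodule.Quotient.mk m))
  refine ⟨F, hF, n, ?_⟩
  rw [Ideal.mem_span_singleton, PowerSeries.X_dvd_iff] at hFn
  simpa [sub_eq_zero] using hFn

theorem isRelPrime_of_isRelPrime_constantCoeff {S : Type*} [CommRing S] {F G : PowerSeries S}
    (h : IsRelPrime (PowerSeries.constantCoeff F) (PowerSeries.constantCoeff G)) :
    IsRelPrime F G := fun _ hF hG ↦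
  PowerSeries.isUnit_iff_constantCoeff.2 (h (map_dvd _ hF) (map_dvd _ hG))

theorem IsPseudoNull.of_isRelPrime {Λ M : Type*} [CommRing Λ] [Nontrivial Λ] [AddCommGroup M]
    [Module Λ M] {f g : Λ} (hf : f ∈ Module.annihilator Λ M) (hg : g ∈ Module.annihilator Λ M)
    (hfg : IsRelPrime f g) : IsPseudoNull Λ M := by
  by_cases h₀ : f ≠ 0 ∧ g ≠ 0
  · exact ⟨f, g, h₀.1, h₀.2, Module.mem_annihilator.1 hf, Module.mem_annihilator.1 hg, hfg⟩
  -- `0` is relatively prime only to units, so if `f` or `g` vanishes then `M = 0`.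
  have h_unit : IsUnit f ∨ IsUnit g := by
    rcases not_and_or.1 h₀ with h | h
    · exact .inr (isRelPrime_zero_left.1 (not_not.1 h ▸ hfg))
    · exact .inl (isRelPrime_zero_right.1 (not_not.1 h ▸ hfg))
  have h_top : Module.annihilator Λ M = ⊤ :=
    h_unit.elim (Ideal.eq_top_of_isUnit_mem _ hf) (Ideal.eq_top_of_isUnit_mem _ hg)
  have h_one : ∀ m : M, (1 : Λ) • m = 0 := Module.mem_annihilator.1 (h_top ▸ Submodule.mem_top)
  exact ⟨1, 1, one_ne_zero, one_ne_zero, h_one, h_one, isRelPrime_one_left⟩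

theorem isPseudoNull_of_isPseudoNull_quot_X_smul_general
    (S : Type*) [CommRing S] [DecompositionMonoid S]
    (M : Type*) [AddCommGroup M] [Module (PowerSeries S) M] [Module.Finite (PowerSeries S) M]
    (hquot : IsPseudoNull S (M ⧸ (Ideal.span {(PowerSeries.X : PowerSeries S)} •
      (⊤ : Submodule (PowerSeries S) M)))) :
    IsPseudoNull (PowerSeries S) M := by
  obtain ⟨f, g, hf₀, -, hf, hg, hfg⟩ := hquot
  have : Nontrivial S := nontrivial_of_ne f 0 hf₀
  obtain ⟨F, hF, a, hFa⟩ := exists_mem_annihilator_constantCoeff_eq_pow hf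
  obtain ⟨G, hG, b, hGb⟩ := exists_mem_annihilator_constantCoeff_eq_pow hg
  refine .of_isRelPrime hF hG (isRelPrime_of_isRelPrime_constantCoeff ?_)
  rw [hFa, hGb]
  exact hfg.pow

end Annihilator

/-- Perrin-Riou's lemma: if `M` is a finitely generated torsion module over
`R = ℤ_p[[T_1, …, T_d, X]] = S[[X]]` with `S = ℤ_p[[T_1, …, T_d]]`, and `M/XM` is
pseudo-null over `S`, then `M` is pseudo-null over `R`. -/
theorem isPseudoNull_of_isPseudoNull_quot_X_smul
    (p : ℕ) [Fact p.Prime] (d : ℕ) (hd : 1 ≤ d)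
    (M : Type*) [AddCommGroup M]
    [Module (PowerSeries (MvPowerSeries (Fin d) ℤ_[p])) M]
    [Module.Finite (PowerSeries (MvPowerSeries (Fin d) ℤ_[p])) M]
    (htors : Module.IsTorsion (PowerSeries (MvPowerSeries (Fin d) ℤ_[p])) M)
    (hquot : IsPseudoNull (MvPowerSeries (Fin d) ℤ_[p])
      (M ⧸ (Ideal.span {(PowerSeries.X : PowerSeries (MvPowerSeries (Fin d) ℤ_[p]))} •
        (⊤ : Submodule (PowerSeries (MvPowerSeries (Fin d) ℤ_[p])) M)))) :
    IsPseudoNull (PowerSeries (MvPowerSeries (Fin d) ℤ_[p])) M := by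
  have := uniqueFactorizationMonoid_mvPowerSeries_fin (A := ℤ_[p]) d
  exact isPseudoNull_of_isPseudoNull_quot_X_smul_general _ M hquot
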